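/- Weighted comparison of unit normals (used in the recovery-sequence estimate): Let ω ⊆ ℝ² be a bounded open set, let ψ_A, ψ, φ : ℝ² → ℝ³ be continuously differentiable on an open neighborhood of the closure of ω, suppose (∇ψ(y))ᵀ∇ψ(y) = (∇ψ_A(y))ᵀ∇ψ_A(y) =: g_A(y) for all y ∈ ω, and suppose ∂₁ψ_A × ∂₂ψ_A ≠ 0 and ∂₁φ × ∂₂φ ≠ 0 on the closure of ω. Then ∫_ω √(det g_A(y)) ‖n[ψ](y) − n[φ](y)‖² dy ≤ 4 ∫_ω ‖∂₁φ(y) × ∂₂φ(y) − ∂₁ψ(y) × ∂₂ψ(y)‖ dy. -/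

import Mathlib

open Matrix MeasureTheory

noncomputable section

/-- `i`-th partial derivative of `ψ : ℝ² → ℝ³` at `x`. -/
def pd (ψ : (Fin 2 → ℝ) → (Fin 3 → ℝ)) (i : Fin 2) (x : Fin 2 → ℝ) : Fin 3 → ℝ :=
  fderiv ℝ ψ x (Pi.single i 1)

/-- Jacobian matrix `∇ψ(x) ∈ ℝ^{3×2}`. -/
def jac (ψ : (Fin 2 → ℝ) → (Fin 3 → ℝ)) (x : Fin 2 → ℝ) : Matrix (Fin 3) (Fin 2) ℝ :=
  Matrix.of fun m i => pd ψ i x m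

/-- First fundamental form `g[ψ](x) = (∇ψ(x))ᵀ ∇ψ(x)`. -/
def met (ψ : (Fin 2 → ℝ) → (Fin 3 → ℝ)) (x : Fin 2 → ℝ) : Matrix (Fin 2) (Fin 2) ℝ :=
  (jac ψ x)ᵀ * jac ψ x

/-- Euclidean inner product on `ℝ³`. -/
def dot3 (u v : Fin 3 → ℝ) : ℝ := ∑ m, u m * v m

/-- Euclidean norm on `ℝ³`. -/
def norm3 (u : Fin 3 → ℝ) : ℝ := Real.sqrt (dot3 u u)

/-- Cross product `∂₁ψ(x) × ∂₂ψ(x)`. -/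
def crossPsi (ψ : (Fin 2 → ℝ) → (Fin 3 → ℝ)) (x : Fin 2 → ℝ) : Fin 3 → ℝ :=
  crossProduct (pd ψ 0 x) (pd ψ 1 x)

/-- Unit normal `n[ψ](x)`. -/
def nrm (ψ : (Fin 2 → ℝ) → (Fin 3 → ℝ)) (x : Fin 2 → ℝ) : Fin 3 → ℝ :=
  (norm3 (crossPsi ψ x))⁻¹ • crossPsi ψ x

/-- Second partial derivative `∂ᵢ∂ⱼψ(x)`. -/
def pd2 (ψ : (Fin 2 → ℝ) → (Fin 3 → ℝ)) (i j : Fin 2) (x : Fin 2 → ℝ) : Fin 3 → ℝ :=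
  pd (pd ψ j) i x

/-- Hessian `D²ψᵐ(x)` of the `m`-th component. -/
def hess (ψ : (Fin 2 → ℝ) → (Fin 3 → ℝ)) (m : Fin 3) (x : Fin 2 → ℝ) :
    Matrix (Fin 2) (Fin 2) ℝ :=
  Matrix.of fun i j => pd2 ψ i j x m

/-- Second fundamental form `II[ψ](x)ᵢⱼ = ∂ᵢ∂ⱼψ(x)·n[ψ](x)`. -/
def sff (ψ : (Fin 2 → ℝ) → (Fin 3 → ℝ)) (x : Fin 2 → ℝ) : Matrix (Fin 2) (Fin 2) ℝ :=
  Matrix.of fun i j => dot3 (pd2 ψ i j x) (nrm ψ x)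

/-- Frobenius inner product `A : B`. -/
def frob {n : Type*} [Fintype n] (A B : Matrix n n ℝ) : ℝ := ∑ i, ∑ j, A i j * B i j

/-- Gram–Schmidt frame vector `y¹[ψ](x)`. -/
def y1 (ψ : (Fin 2 → ℝ) → (Fin 3 → ℝ)) (x : Fin 2 → ℝ) : Fin 3 → ℝ :=
  (norm3 (pd ψ 0 x))⁻¹ • pd ψ 0 x

/-- Gram–Schmidt vector `ŷ²[ψ](x)` (before normalization). -/
def yhat2 (ψ : (Fin 2 → ℝ) → (Fin 3 → ℝ)) (x : Fin 2 → ℝ) : Fin 3 → ℝ :=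
  pd ψ 1 x - (dot3 (pd ψ 1 x) (y1 ψ x)) • y1 ψ x

/-- Gram–Schmidt frame vector `y²[ψ](x)`. -/
def y2 (ψ : (Fin 2 → ℝ) → (Fin 3 → ℝ)) (x : Fin 2 → ℝ) : Fin 3 → ℝ :=
  (norm3 (yhat2 ψ x))⁻¹ • yhat2 ψ x

/-!
By Lagrange's identity the weight `√(det g)` equals `‖a‖`, where `a = ∂₁ψ × ∂₂ψ`, so with
`b = ∂₁φ × ∂₂φ` the claim follows by integrating a pointwise bound between a vector and its
direction: `‖a‖ ‖a/‖a‖ - b/‖b‖‖² ≤ 4 ‖b - a‖`. One factor `‖a/‖a‖ - b/‖b‖‖` is at most `2`, and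
`‖a‖` times the other is at most `2 ‖b - a‖`, since replacing `‖a‖` by `‖b‖` in `‖a‖ • (b/‖b‖)`
costs at most `‖b - a‖`.
-/

section Normalize

open NormedSpace

variable {E : Type*} [NormedAddCommGroup E] [NormedSpace ℝ E] {y : E}

lemma norm_mul_norm_normalize_sub_normalize_le (x : E) (hy : y ≠ 0) :
    ‖x‖ * ‖normalize x - normalize y‖ ≤ 2 * ‖x - y‖ := by
  have decomposition : ‖x‖ • (normalize x - normalize y) =
      (x - y) + (‖y‖ - ‖x‖) • normalize y := by
    rw [smul_sub, sub_smul, norm_smul_normalize, norm_smul_normalize]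
    abel
  calc ‖x‖ * ‖normalize x - normalize y‖
      = ‖(x - y) + (‖y‖ - ‖x‖) • normalize y‖ := by
        rw [← decomposition, norm_smul, norm_norm]
    _ ≤ ‖x - y‖ + |‖y‖ - ‖x‖| := by
        simpa only [norm_smul, Real.norm_eq_abs, norm_normalize hy, mul_one] using
          norm_add_le (x - y) ((‖y‖ - ‖x‖) • normalize y)
    _ ≤ 2 * ‖x - y‖ := by
        linarith [abs_norm_sub_norm_le y x, norm_sub_rev x y]

lemma norm_mul_norm_normalize_sub_normalize_sq_le (x : E) (hy : y ≠ 0) :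
    ‖x‖ * ‖normalize x - normalize y‖ ^ 2 ≤ 4 * ‖x - y‖ := by
  rcases eq_or_ne x 0 with rfl | hx
  · simp
  have diff_le_two : ‖normalize x - normalize y‖ ≤ 2 := by
    linarith [norm_sub_le (normalize x) (normalize y), norm_normalize hx, norm_normalize hy]
  calc ‖x‖ * ‖normalize x - normalize y‖ ^ 2
      = ‖x‖ * ‖normalize x - normalize y‖ * ‖normalize x - normalize y‖ := by ring
    _ ≤ 2 * ‖x - y‖ * 2 := by
        gcongr ?_ * ?_
        exact norm_mul_norm_normalize_sub_normalize_le x hy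
    _ = 4 * ‖x - y‖ := by ring

end Normalize

lemma norm3_eq_norm_toLp (u : Fin 3 → ℝ) : norm3 u = ‖WithLp.toLp 2 u‖ := by
  simp only [norm3, dot3, EuclideanSpace.norm_eq, Real.norm_eq_abs, sq_abs, ← pow_two]

lemma continuous_norm3 : Continuous norm3 := by
  unfold norm3 dot3
  fun_prop

section Surface

variable {ψ φ : (Fin 2 → ℝ) → (Fin 3 → ℝ)} {U : Set (Fin 2 → ℝ)}

lemma det_met (ψ : (Fin 2 → ℝ) → (Fin 3 → ℝ)) (x : Fin 2 → ℝ) :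
    (met ψ x).det = dot3 (crossPsi ψ x) (crossPsi ψ x) := by
  have met_apply (i j : Fin 2) : met ψ x i j = pd ψ i x ⬝ᵥ pd ψ j x := rfl
  have lagrange := cross_dot_cross (pd ψ 0 x) (pd ψ 1 x) (pd ψ 0 x) (pd ψ 1 x)
  rw [det_fin_two, met_apply, met_apply, met_apply, met_apply]
  exact lagrange.symm

lemma sqrt_det_met (ψ : (Fin 2 → ℝ) → (Fin 3 → ℝ)) (x : Fin 2 → ℝ) :
    √(met ψ x).det = norm3 (crossPsi ψ x) := by
  rw [det_met, norm3]

lemma toLp_nrm (ψ : (Fin 2 → ℝ) → (Fin 3 → ℝ)) (x : Fin 2 → ℝ) :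
    WithLp.toLp 2 (nrm ψ x) = NormedSpace.normalize (WithLp.toLp 2 (crossPsi ψ x)) := by
  rw [nrm, norm3_eq_norm_toLp, WithLp.toLp_smul, NormedSpace.normalize]

lemma sqrt_det_met_mul_norm3_nrm_sub_sq_le (ψ : (Fin 2 → ℝ) → (Fin 3 → ℝ)) {x : Fin 2 → ℝ}
    (hφ : crossPsi φ x ≠ 0) :
    √(met ψ x).det * norm3 (nrm ψ x - nrm φ x) ^ 2 ≤
      4 * norm3 (crossPsi φ x - crossPsi ψ x) := by
  have hφ' : WithLp.toLp 2 (crossPsi φ x) ≠ 0 := (WithLp.toLp_eq_zero 2).not.mpr hφ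
  simpa only [sqrt_det_met, norm3_eq_norm_toLp, WithLp.toLp_sub, toLp_nrm,
    norm_sub_rev (WithLp.toLp 2 (crossPsi φ x))] using
    norm_mul_norm_normalize_sub_normalize_sq_le (WithLp.toLp 2 (crossPsi ψ x)) hφ'

lemma continuousOn_pd (hU : IsOpen U) (hψ : ContDiffOn ℝ 1 ψ U) (i : Fin 2) :
    ContinuousOn (pd ψ i) U :=
  (hψ.continuousOn_fderiv_of_isOpen hU le_rfl).clm_apply continuousOn_const

lemma continuousOn_crossPsi (hU : IsOpen U) (hψ : ContDiffOn ℝ 1 ψ U) :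
    ContinuousOn (crossPsi ψ) U :=
  ((crossProduct (R := ℝ)).toContinuousBilinearMap.continuous.comp_continuousOn
    (continuousOn_pd hU hψ 0)).clm_apply (continuousOn_pd hU hψ 1)

lemma integrableOn_norm3_crossPsi_sub {ω : Set (Fin 2 → ℝ)} (hω : Bornology.IsBounded ω)
    (hU : IsOpen U) (hωU : closure ω ⊆ U) (hψ : ContDiffOn ℝ 1 ψ U) (hφ : ContDiffOn ℝ 1 φ U) :
    IntegrableOn (fun x => norm3 (crossPsi φ x - crossPsi ψ x)) ω := by
  have continuousOn_closure :
      ContinuousOn (fun x => norm3 (crossPsi φ x - crossPsi ψ x)) (closure ω) :=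
    continuous_norm3.comp_continuousOn
      (((continuousOn_crossPsi hU hφ).sub (continuousOn_crossPsi hU hψ)).mono hωU)
  exact (continuousOn_closure.integrableOn_compact hω.isCompact_closure).mono_set subset_closure

end Surface

theorem weighted_normal_comparison_general {ω U : Set (Fin 2 → ℝ)} (hω : MeasurableSet ω)
    (hωb : Bornology.IsBounded ω) (hU : IsOpen U) (hωU : closure ω ⊆ U)
    {g : (Fin 2 → ℝ) → Matrix (Fin 2) (Fin 2) ℝ} {ψ φ : (Fin 2 → ℝ) → (Fin 3 → ℝ)}
    (hψ : ContDiffOn ℝ 1 ψ U) (hφ : ContDiffOn ℝ 1 φ U)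
    (hmet : ∀ x ∈ ω, met ψ x = g x) (hcφ : ∀ x ∈ ω, crossPsi φ x ≠ 0) :
    ∫ x in ω, √(g x).det * norm3 (nrm ψ x - nrm φ x) ^ 2
      ≤ 4 * ∫ x in ω, norm3 (crossPsi φ x - crossPsi ψ x) := by
  have pointwise (x) (hx : x ∈ ω) : √(g x).det * norm3 (nrm ψ x - nrm φ x) ^ 2 ≤
      4 * norm3 (crossPsi φ x - crossPsi ψ x) :=
    hmet x hx ▸ sqrt_det_met_mul_norm3_nrm_sub_sq_le ψ (hcφ x hx)
  have integrable := integrableOn_norm3_crossPsi_sub hωb hU hωU hψ hφ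
  rw [← integral_const_mul]
  exact integral_mono_of_nonneg (.of_forall fun x => by positivity) (integrable.const_mul 4)
    (ae_restrict_of_forall_mem hω pointwise)

/-- Weighted comparison of unit normals (recovery-sequence
estimate):
`∫_ω √(det g_A) ‖n[ψ] − n[φ]‖² ≤ 4 ∫_ω ‖∂₁φ × ∂₂φ − ∂₁ψ × ∂₂ψ‖`. -/
theorem weighted_normal_comparison
    (ω U : Set (Fin 2 → ℝ)) (hωo : IsOpen ω) (hωb : Bornology.IsBounded ω)
    (hU : IsOpen U) (hcl : closure ω ⊆ U)
    (ψA ψ φ : (Fin 2 → ℝ) → (Fin 3 → ℝ))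
    (hA : ContDiffOn ℝ 1 ψA U) (hψ : ContDiffOn ℝ 1 ψ U)
    (hφ : ContDiffOn ℝ 1 φ U)
    (hmet : ∀ y ∈ ω, met ψ y = met ψA y)
    (hcA : ∀ y ∈ closure ω, crossPsi ψA y ≠ 0)
    (hcφ : ∀ y ∈ closure ω, crossPsi φ y ≠ 0) :
    ∫ y in ω, Real.sqrt (met ψA y).det * norm3 (nrm ψ y - nrm φ y) ^ 2
      ≤ 4 * ∫ y in ω, norm3 (crossPsi φ y - crossPsi ψ y) :=
  weighted_normal_comparison_general hωo.measurableSet hωb hU hcl hψ hφ hmet fun y hy =>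
    hcφ y (subset_closure hy)

end
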